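/- arXiv:2105.07247 — 2 statements merged into one kernel-verified Lean document; each statement's English description precedes it below -/
import Mathlib

section
/- Let G be a finite group, N a normal subgroup of G with Q = G/N abelian, and q ∈ G. Choose a representative ρ for each Q̂-orbit in R_q and a representative g for each conjugacy class in C_q. Then the square matrix M_q with rows indexed by R_q and columns indexed by C_q, whose ([ρ],[g]) entry is √(#[g]·#[ρ]/#G) · ρ(g), is unitary (where #[g] is the size of the conjugacy class of g and #[ρ] is the size of the Q̂-orbit of ρ). -/
open scoped BigOperators

/-- `ρ : G → ℂ` is the character of an irreducible (simple) finite-dimensional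
complex representation of `G`. -/
def IsIrrChar (G : Type) [Group G] (ρ : G → ℂ) : Prop :=
  ∃ V : FDRep ℂ G, CategoryTheory.Simple V ∧ ρ = V.character

/-- `Θ : G → ℂ` is the character of some finite-dimensional complex representation of `G`. -/
def IsChar (G : Type) [Group G] (Θ : G → ℂ) : Prop :=
  ∃ V : FDRep ℂ G, Θ = V.character

variable {G : Type} [Group G]

/-- The action of a character `χ ∈ Q̂` (where `Q = G ⧸ N`) on a function `ρ : G → ℂ`:
`(χ · ρ)(g) = χ(gN) · ρ(g)`. -/
def charMul (N : Subgroup G) [N.Normal] (χ : (G ⧸ N) →* ℂˣ) (ρ : G → ℂ) : G → ℂ :=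
  fun g => (χ (g : G ⧸ N) : ℂ) * ρ g

/-- The orbit of `ρ` under the tensoring action of `Q̂ = Hom(G ⧸ N, ℂˣ)`. -/
def qhatOrbit (N : Subgroup G) [N.Normal] (ρ : G → ℂ) : Set (G → ℂ) :=
  {ρ' | ∃ χ : (G ⧸ N) →* ℂˣ, ρ' = charMul N χ ρ}

/-- The coset `qN`, as a subset of `G`. -/
def coset (N : Subgroup G) [N.Normal] (q : G) : Set G :=
  {g | (g : G ⧸ N) = (q : G ⧸ N)}

/-- `C_q`: the set of conjugacy classes of `G` contained in the coset `qN`. -/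
def Cset (N : Subgroup G) [N.Normal] (q : G) : Set (ConjClasses G) :=
  {c | c.carrier ⊆ coset N q}

/-- `R_q`: the set of `Q̂`-orbits on the irreducible characters of `G`
containing a character not identically zero on `qN`. -/
def Rset (N : Subgroup G) [N.Normal] (q : G) : Set (Set (G → ℂ)) :=
  {S | (∃ ρ, IsIrrChar G ρ ∧ S = qhatOrbit N ρ) ∧ ∃ ρ' ∈ S, ∃ g ∈ coset N q, ρ' g ≠ 0}

/-- The class function `π_x` for `x ∈ Q = G ⧸ N`:
`π_x(g) = (1/#Q̂) ∑_{χ ∈ Q̂} conj(χ(x)) χ(gN)`. -/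
noncomputable def piQ (N : Subgroup G) [N.Normal] (x : G ⧸ N) : G → ℂ :=
  fun g => (Nat.card ((G ⧸ N) →* ℂˣ) : ℂ)⁻¹ *
    ∑ᶠ χ : (G ⧸ N) →* ℂˣ, (starRingEnd ℂ) (χ x : ℂ) * (χ (g : G ⧸ N) : ℂ)

/-- The space of class functions on `G`, as a submodule of `G → ℂ`. -/
noncomputable def classFunSubmodule (G : Type) [Group G] : Submodule ℂ (G → ℂ) where
  carrier := {f | ∀ g h : G, f (h * g * h⁻¹) = f g}
  add_mem' := by intro a b ha hb g h; simp only [Pi.add_apply, ha g h, hb g h]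
  zero_mem' := by intro g h; rfl
  smul_mem' := by intro c f hf g h; simp only [Pi.smul_apply, hf g h]

/-- The space of class functions on `G` vanishing outside the coset `qN`. -/
noncomputable def cosetClassFun (N : Subgroup G) [N.Normal] (q : G) : Submodule ℂ (G → ℂ) where
  carrier := {f | (∀ g h : G, f (h * g * h⁻¹) = f g) ∧ ∀ g, g ∉ coset N q → f g = 0}
  add_mem' := by
    intro a b ha hb
    exact ⟨fun g h => by simp only [Pi.add_apply, ha.1 g h, hb.1 g h],
      fun g hg => by simp only [Pi.add_apply, ha.2 g hg, hb.2 g hg, add_zero]⟩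
  zero_mem' := ⟨fun g h => rfl, fun g hg => rfl⟩
  smul_mem' := by
    intro c f hf
    exact ⟨fun g h => by simp only [Pi.smul_apply, hf.1 g h],
      fun g hg => by simp only [Pi.smul_apply, hf.2 g hg, smul_zero]⟩

/-!
Twisting an irreducible character by `χ ∈ Q̂` gives an irreducible character, and averaging the
twists against `χ(q)⁻¹` cuts a function down to the coset `qN`. The orthogonality relations on `G`
therefore restrict to `qN`: characters in different `Q̂`-orbits are orthogonal over `qN`, while a
character `ρ` which does not vanish on `qN` pairs with itself to the order of its stabilizer times
`#G / #Q̂`, that is to `#G / #[ρ]`, because every `χ` fixing `ρ` has `χ(q) = 1`. So the rows of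
`M_q` are orthonormal.

Nothing so far says that `M_q` is square; this is a matter of completeness. A class function
supported on `qN` and orthogonal to all rows is orthogonal to all irreducible characters, hence acts
by zero on every simple `ℂ[G]`-module by Schur's lemma, and is zero because `ℂ[G]` is semisimple.
-/

open scoped ComplexConjugate Matrix

universe u v

theorem matrix_mul_eq_one_of_forall_vecMul_eq_zero {m n R : Type*} [Fintype m] [Fintype n]
    [DecidableEq m] [DecidableEq n] [Ring R] {A : Matrix m n R} {B : Matrix n m R} (hAB : A * B = 1)
    (hB : ∀ v, v ᵥ* B = 0 → v = 0) : B * A = 1 := by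
  have hmul : (B * A - 1) * B = 0 := by
    rw [Matrix.sub_mul, Matrix.mul_assoc, hAB, Matrix.mul_one, Matrix.one_mul, sub_self]
  refine sub_eq_zero.1 (funext fun i ↦ hB _ ?_)
  rw [← Matrix.mul_apply_eq_vecMul, hmul]
  rfl

section Trace

open Module End

theorem isSemisimple_of_pow_eq_one {K V : Type*} [Field K] [AddCommGroup V] [Module K V]
    {f : End K V} {n : ℕ} (hn : (n : K) ≠ 0) (hf : f ^ n = 1) : f.IsSemisimple :=
  isSemisimple_of_squarefree_aeval_eq_zero (p := .X ^ n - 1)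
    (Polynomial.separable_X_pow_sub_C 1 hn one_ne_zero).squarefree (by simp [hf])

theorem trace_eq_sum_of_forall_mem_eigenspace {K V : Type*} [Field K] [IsAlgClosed K]
    [AddCommGroup V] [Module K V] [FiniteDimensional K V] {f g : End K V} (hf : f.IsSemisimple)
    {c : K → K} (hg : ∀ μ, ∀ v ∈ f.eigenspace μ, g v = c μ • v) :
    LinearMap.trace K V g =
      ∑ μ ∈ f.finite_hasEigenvalue.toFinset, c μ * finrank K (f.eigenspace μ) := by
  classical
  have hint : DirectSum.IsInternal f.eigenspace :=
    (DirectSum.isInternal_submodule_iff_iSupIndep_and_iSup_eq_top _).2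
      ⟨f.eigenspaces_iSupIndep, hf.iSup_eigenspace_eq_top⟩
  have hmaps (μ : K) : Set.MapsTo g (f.eigenspace μ) (f.eigenspace μ) := fun v hv ↦ by
    rw [hg μ v hv]
    exact (f.eigenspace μ).smul_mem _ hv
  have hrestrict (μ : K) : g.restrict (hmaps μ) = c μ • 1 :=
    LinearMap.ext fun v ↦ Subtype.ext (hg μ v v.2)
  rw [LinearMap.trace_eq_sum_trace_restrict' hint f.finite_hasEigenvalue hmaps]
  simp only [hrestrict, map_smul, LinearMap.trace_one, smul_eq_mul]
  rfl

theorem conj_smul_eq_of_mem_eigenspace {V : Type*} [AddCommGroup V] [Module ℂ V]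
    {f g : End ℂ V} {n : ℕ} (hn : n ≠ 0) (hf : f ^ n = 1) (hgf : g * f = 1) {μ : ℂ} {v : V}
    (hv : v ∈ f.eigenspace μ) : g v = conj μ • v := by
  obtain rfl | hv₀ := eq_or_ne v 0
  · simp
  have hμ : μ ^ n = 1 := by
    have h := HasEigenvector.pow_apply ⟨hv, hv₀⟩ n
    rw [hf, one_apply] at h
    exact (smul_left_injective ℂ hv₀ (by simpa only [one_smul] using h)).symm
  have hnorm : conj μ * μ = 1 := by
    rw [Complex.conj_mul', Complex.norm_eq_one_of_pow_eq_one hμ hn, Complex.ofReal_one, one_pow]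
  have hgv : μ • g v = v := by
    rw [← map_smul, ← mem_eigenspace_iff.1 hv, ← mul_apply, hgf, one_apply]
  calc g v = (conj μ * μ) • g v := by rw [hnorm, one_smul]
    _ = conj μ • v := by rw [mul_smul, hgv]

theorem trace_eq_conj_trace_of_mul_eq_one {V : Type*} [AddCommGroup V] [Module ℂ V]
    [FiniteDimensional ℂ V] {f g : End ℂ V} {n : ℕ} (hn : n ≠ 0) (hf : f ^ n = 1)
    (hgf : g * f = 1) : LinearMap.trace ℂ V g = conj (LinearMap.trace ℂ V f) := by
  have hss : f.IsSemisimple := isSemisimple_of_pow_eq_one (Nat.cast_ne_zero.2 hn) hf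
  rw [trace_eq_sum_of_forall_mem_eigenspace hss fun μ v ↦ conj_smul_eq_of_mem_eigenspace hn hf hgf,
    trace_eq_sum_of_forall_mem_eigenspace hss (c := id) fun μ v ↦ mem_eigenspace_iff.1]
  simp

end Trace

section Completeness

open Representation MonoidAlgebra

theorem eq_zero_of_forall_isCoatom_smul_eq_zero {R : Type*} [Ring R] [IsSemisimpleRing R] {x : R}
    (h : ∀ I : Submodule R R, IsCoatom I → ∀ m : R ⧸ I, x • m = 0) : x = 0 := by
  have hx : x ∈ Module.jacobson R R := by
    refine Submodule.mem_sInf.2 fun I hI ↦ ?_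
    have := h I hI (Submodule.Quotient.mk 1)
    rwa [← Submodule.Quotient.mk_smul, Submodule.Quotient.mk_eq_zero, smul_eq_mul, mul_one] at this
  rwa [IsSemisimpleModule.jacobson_eq_bot, Submodule.mem_bot] at hx

section OfModule

variable {k G M : Type*} [Field k] [Group G] [AddCommGroup M] [Module k M] [Module k[G] M]
  [IsScalarTower k k[G] M]

theorem asAlgebraHom_ofModule'_apply (r : k[G]) (m : M) :
    (ofModule' (k := k) (G := G) M).asAlgebraHom r m = r • m :=
  LinearMap.congr_fun (DFunLike.congr_fun
    ((MonoidAlgebra.lift k _ G).apply_symm_apply (Algebra.lsmul k k M)) r) m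

theorem isIrreducible_ofModule' [IsSimpleModule k[G] M] :
    (ofModule' (k := k) (G := G) M).IsIrreducible := by
  let σ := ofModule' (k := k) (G := G) M
  let e : σ.asModule ≃ₗ[k[G]] M :=
    { σ.asModuleEquiv.toAddEquiv with
      map_smul' := fun r m ↦
        (σ.asModuleEquiv_map_smul r m).trans (asAlgebraHom_ofModule'_apply r _) }
  exact (irreducible_iff_isSimpleModule_asModule σ).2 (IsSimpleModule.congr e)

end OfModule

variable {k : Type u} {G : Type v} [Field k] [Group G] [Fintype G]

/-- The operator `∑ g, f g • σ g` attached to a class function `f`, as an endomorphism of the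
representation `σ`, so that Schur's lemma applies to it. -/
def classSumIntertwiningMap {V : Type*} [AddCommGroup V] [Module k V]
    (σ : Representation k G V) {f : G → k} (hf : ∀ g h, f (h * g * h⁻¹) = f g) :
    IntertwiningMap σ σ where
  toLinearMap := ∑ g, f g • σ g
  isIntertwining' h := by
    change (∑ g, f g • σ g) * σ h = σ h * ∑ g, f g • σ g
    rw [Finset.sum_mul, Finset.mul_sum]
    refine (Fintype.sum_equiv (MulAut.conj h).toEquiv _ _ fun g ↦ ?_).symm
    simp [hf, ← map_mul]

variable [IsAlgClosed k] [CharZero k]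

theorem sum_smul_eq_zero_of_sum_mul_character_eq_zero {V : Type*} [AddCommGroup V] [Module k V]
    [FiniteDimensional k V] (σ : Representation k G V) [σ.IsIrreducible] {f : G → k}
    (hf : ∀ g h, f (h * g * h⁻¹) = f g) (hσ : ∑ g, f g * σ.character g = 0) :
    ∑ g, f g • σ g = 0 := by
  obtain ⟨c, hc⟩ := IsIrreducible.algebraMap_intertwiningMap_bijective_of_isAlgClosed.surjective
    (classSumIntertwiningMap σ hf)
  have hsum : ∑ g, f g • σ g = c • 1 := congrArg IntertwiningMap.toLinearMap hc.symm
  have htrace : c * Module.finrank k V = 0 := by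
    rw [← smul_eq_mul, ← LinearMap.trace_one, ← map_smul, ← hsum, map_sum, ← hσ]
    simp only [map_smul, smul_eq_mul, character]
  have : IsSimpleModule k[G] σ.asModule := (irreducible_iff_isSimpleModule_asModule σ).1 ‹_›
  have : Nontrivial V := IsSimpleModule.nontrivial k[G] σ.asModule
  have hfinrank : (Module.finrank k V : k) ≠ 0 := Nat.cast_ne_zero.2 Module.finrank_pos.ne'
  rw [hsum, (mul_eq_zero.1 htrace).resolve_right hfinrank, zero_smul]

theorem eq_zero_of_forall_sum_mul_character_eq_zero {f : G → k}
    (hf : ∀ g h, f (h * g * h⁻¹) = f g)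
    (h : ∀ (V : Type (max u v)) [AddCommGroup V] [Module k V] [FiniteDimensional k V]
      (σ : Representation k G V) [σ.IsIrreducible], ∑ g, f g * σ.character g = 0) : f = 0 := by
  have hx : ∑ g, single g (f g) = 0 := by
    refine eq_zero_of_forall_isCoatom_smul_eq_zero fun I hI m ↦ ?_
    have : IsSimpleModule k[G] (k[G] ⧸ I) := isSimpleModule_iff_isCoatom.2 hI
    have : FiniteDimensional k (k[G] ⧸ I) := Module.Finite.trans k[G] _
    let σ : Representation k G (k[G] ⧸ I) := ofModule' (k[G] ⧸ I)
    have : σ.IsIrreducible := isIrreducible_ofModule'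
    have hσ := sum_smul_eq_zero_of_sum_mul_character_eq_zero σ hf (h _ σ)
    calc (∑ g, single g (f g)) • m = σ.asAlgebraHom (∑ g, single g (f g)) m :=
          (asAlgebraHom_ofModule'_apply _ m).symm
      _ = (∑ g, f g • σ g) m := by simp only [map_sum, asAlgebraHom_single]
      _ = 0 := by rw [hσ, LinearMap.zero_apply]
  ext g
  classical
  simpa [Finsupp.single_apply] using congrArg (fun x ↦ x.coeff g) hx

end Completeness

section IrreducibleCharacters

/-- The twist `χ ⊗ σ` of a representation `σ` by a one-dimensional representation `χ`, realised on
the space of `σ`. It shows that `Q̂` permutes the irreducible characters. -/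
def twistedRepresentation {k G V : Type*} [CommSemiring k] [Monoid G] [AddCommMonoid V]
    [Module k V] (χ : G →* k) (σ : Representation k G V) : Representation k G V where
  toFun g := χ g • σ g
  map_one' := by rw [map_one, map_one, one_smul]
  map_mul' g h := by rw [map_mul, map_mul, smul_mul_smul_comm]

theorem character_twistedRepresentation {k G V : Type*} [Field k] [Group G] [AddCommGroup V]
    [Module k V] (χ : G →* k) (σ : Representation k G V) (g : G) :
    (twistedRepresentation χ σ).character g = χ g * σ.character g :=
  map_smul (LinearMap.trace k V) (χ g) (σ g)

theorem isIrrChar_character_of_sum_mul_inv [Fintype G] {V : Type} [AddCommGroup V] [Module ℂ V]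
    [FiniteDimensional ℂ V] {σ : Representation ℂ G V}
    (h : ∑ g, σ.character g * σ.character g⁻¹ = Nat.card G) : IsIrrChar G σ.character :=
  ⟨FDRep.of σ, (FDRep.simple_iff_char_is_norm_one (FDRep.of σ)).2 h, rfl⟩

theorem isIrrChar_character [Finite G] {V : Type} [AddCommGroup V] [Module ℂ V]
    [FiniteDimensional ℂ V] (σ : Representation ℂ G V) [σ.IsIrreducible] :
    IsIrrChar G σ.character := by
  have := Fintype.ofFinite G
  have : Invertible (Nat.card G : ℂ) := invertibleOfNonzero (Nat.cast_ne_zero.2 Nat.card_pos.ne')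
  have h := Representation.char_orthonormal σ σ
  rw [if_pos ⟨.refl σ⟩, inv_mul_eq_one₀ (Nat.cast_ne_zero.2 Nat.card_pos.ne')] at h
  exact isIrrChar_character_of_sum_mul_inv h.symm

namespace IsIrrChar

variable {ρ σ : G → ℂ}

theorem mem_classFunSubmodule (hρ : IsIrrChar G ρ) : ρ ∈ classFunSubmodule G := by
  obtain ⟨V, _, rfl⟩ := hρ
  exact V.char_conj

theorem apply_inv [Finite G] (hρ : IsIrrChar G ρ) (g : G) : ρ g⁻¹ = conj (ρ g) := by
  obtain ⟨V, _, rfl⟩ := hρ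
  refine trace_eq_conj_trace_of_mul_eq_one (n := Nat.card G) Nat.card_pos.ne' ?_ ?_
  · rw [← map_pow, pow_card_eq_one', map_one]
  · rw [← map_mul, inv_mul_cancel, map_one]

open Classical in
theorem sum_mul_conj [Fintype G] (hρ : IsIrrChar G ρ) (hσ : IsIrrChar G σ) :
    ∑ g, ρ g * conj (σ g) = if ρ = σ then (Fintype.card G : ℂ) else 0 := by
  simp only [← hσ.apply_inv]
  obtain ⟨V, _, rfl⟩ := hρ
  obtain ⟨W, _, rfl⟩ := hσ
  have hG : (Nat.card G : ℂ) ≠ 0 := Nat.cast_ne_zero.2 Nat.card_pos.ne'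
  split_ifs with h
  · rw [← h, (FDRep.simple_iff_char_is_norm_one V).1 ‹_›, Nat.card_eq_fintype_card]
  · have : Invertible (Nat.card G : ℂ) := invertibleOfNonzero hG
    have hVW : ¬ Nonempty (V ≅ W) := fun ⟨e⟩ ↦ h (FDRep.char_iso e)
    have horth := FDRep.char_orthonormal V W
    rw [if_neg hVW] at horth
    exact (mul_eq_zero.1 horth).resolve_left (inv_ne_zero hG)

protected theorem charMul [Finite G] {N : Subgroup G} [N.Normal] (hρ : IsIrrChar G ρ)
    (χ : (G ⧸ N) →* ℂˣ) : IsIrrChar G (charMul N χ ρ) := by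
  have := Fintype.ofFinite G
  obtain ⟨V, _, rfl⟩ := hρ
  let η : G →* ℂ := (Units.coeHom ℂ).comp (χ.comp (QuotientGroup.mk' N))
  have hη (g : G) : η g * η g⁻¹ = 1 := by rw [← map_mul, mul_inv_cancel, map_one]
  have hchar : (twistedRepresentation η V.ρ).character = charMul N χ V.character :=
    funext (character_twistedRepresentation η V.ρ)
  rw [← hchar]
  refine isIrrChar_character_of_sum_mul_inv ?_
  rw [← (FDRep.simple_iff_char_is_norm_one V).1 ‹_›]
  refine Finset.sum_congr rfl fun g _ ↦ ?_
  calc _ = (η g * V.character g) * (η g⁻¹ * V.character g⁻¹) := by rw [hchar]; rfl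
    _ = V.character g * V.character g⁻¹ := by rw [mul_mul_mul_comm, hη, one_mul]

end IsIrrChar

theorem eq_zero_of_forall_isIrrChar_sum_mul_conj_eq_zero [Fintype G] {f : G → ℂ}
    (hf : f ∈ classFunSubmodule G) (h : ∀ ρ, IsIrrChar G ρ → ∑ g, f g * conj (ρ g) = 0) :
    f = 0 := by
  refine star_eq_zero.1 (eq_zero_of_forall_sum_mul_character_eq_zero
    (fun g k ↦ congrArg conj (hf g k)) fun V _ _ _ σ _ ↦ ?_)
  have hσ := congrArg conj (h _ (isIrrChar_character σ))
  simp only [map_sum, map_mul, Complex.conj_conj, map_zero] at hσ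
  exact hσ

end IrreducibleCharacters

section DualAction

theorem sum_monoidHom_units_apply {Q R : Type*} [CommGroup Q] [Finite Q] [CommRing R] [IsDomain R]
    [HasEnoughRootsOfUnity R (Monoid.exponent Q)] [Fintype (Q →* Rˣ)] [DecidableEq Q] (x : Q) :
    ∑ χ : Q →* Rˣ, (χ x : R) = if x = 1 then (Fintype.card (Q →* Rˣ) : R) else 0 := by
  classical
  have : NeZero (Monoid.exponent Q) := ⟨Monoid.exponent_ne_zero_of_finite⟩
  let ev : (Q →* Rˣ) →* R := (Units.coeHom R).comp (MonoidHom.eval x)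
  have hev : ev = 1 ↔ x = 1 := by
    refine ⟨fun h ↦ ?_, fun h ↦ MonoidHom.ext fun χ ↦ by simp [ev, h]⟩
    by_contra hx
    obtain ⟨χ, hχ⟩ := CommGroup.exists_apply_ne_one_of_hasEnoughRootsOfUnity Q R hx
    exact hχ (Units.ext (DFunLike.congr_fun h χ))
  have hsum := sum_hom_units ev
  simp only [hev, Nat.cast_ite, Nat.cast_zero] at hsum
  exact hsum

variable {N : Subgroup G} [N.Normal] {ρ σ : G → ℂ} {q : G}

/-- The action of `Q̂` on functions `G → ℂ` whose orbits are the sets `qhatOrbit N ρ`, so that the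
orbit-stabilizer theorem applies to them. -/
noncomputable abbrev qhatMulAction (N : Subgroup G) [N.Normal] :
    MulAction ((G ⧸ N) →* ℂˣ) (G → ℂ) where
  smul := charMul N
  one_smul ρ := funext fun g ↦ one_mul (ρ g)
  mul_smul χ ψ ρ := funext fun g ↦ mul_assoc (χ g : ℂ) (ψ g) (ρ g)

attribute [local instance] qhatMulAction

theorem qhatOrbit_eq_orbit (N : Subgroup G) [N.Normal] (ρ : G → ℂ) :
    qhatOrbit N ρ = MulAction.orbit ((G ⧸ N) →* ℂˣ) ρ :=
  Set.ext fun _ ↦ exists_congr fun _ ↦ eq_comm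

theorem mem_qhatOrbit_self (N : Subgroup G) [N.Normal] (ρ : G → ℂ) : ρ ∈ qhatOrbit N ρ := by
  rw [qhatOrbit_eq_orbit]
  exact MulAction.mem_orbit_self ρ

theorem qhatOrbit_eq_of_mem (h : σ ∈ qhatOrbit N ρ) : qhatOrbit N σ = qhatOrbit N ρ := by
  rw [qhatOrbit_eq_orbit] at h
  rw [qhatOrbit_eq_orbit, qhatOrbit_eq_orbit, MulAction.orbit_eq_iff.2 h]

theorem ncard_qhatOrbit_mul_card_stabilizer (N : Subgroup G) [N.Normal] (ρ : G → ℂ) :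
    (qhatOrbit N ρ).ncard * Nat.card (MulAction.stabilizer ((G ⧸ N) →* ℂˣ) ρ) =
      Nat.card ((G ⧸ N) →* ℂˣ) := by
  rw [qhatOrbit_eq_orbit, ← MulAction.index_stabilizer, Subgroup.index_mul_card]

theorem ncard_qhatOrbit_ne_zero [Finite G] (N : Subgroup G) [N.Normal] (ρ : G → ℂ) :
    (qhatOrbit N ρ).ncard ≠ 0 :=
  left_ne_zero_of_mul (ncard_qhatOrbit_mul_card_stabilizer N ρ ▸ Nat.card_pos.ne')

theorem apply_eq_one_of_charMul_eq_self {χ : (G ⧸ N) →* ℂˣ} (hχ : charMul N χ ρ = ρ) {g : G}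
    (hg : g ∈ coset N q) (hρg : ρ g ≠ 0) : χ q = 1 := by
  have h : (χ (g : G ⧸ N) : ℂ) = 1 := mul_right_cancel₀ hρg ((congrFun hχ g).trans (one_mul _).symm)
  rw [show (g : G ⧸ N) = q from hg] at h
  exact Units.ext h

theorem charMul_apply_of_mem_coset (χ : (G ⧸ N) →* ℂˣ) (ρ : G → ℂ) {g : G} (hg : g ∈ coset N q) :
    charMul N χ ρ g = χ q * ρ g := by
  rw [charMul, show (g : G ⧸ N) = q from hg]

variable {S : Set (G → ℂ)}

theorem eq_qhatOrbit_of_mem_Rset (hS : S ∈ Rset N q) (hρ : ρ ∈ S) : S = qhatOrbit N ρ := by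
  obtain ⟨⟨σ, -, rfl⟩, -⟩ := hS
  exact (qhatOrbit_eq_of_mem hρ).symm

theorem exists_mem_coset_ne_zero_of_mem_Rset (hS : S ∈ Rset N q) (hρ : ρ ∈ S) :
    ∃ g ∈ coset N q, ρ g ≠ 0 := by
  rw [eq_qhatOrbit_of_mem_Rset hS hρ] at hS
  obtain ⟨-, _, ⟨χ, rfl⟩, g, hg, hρg⟩ := hS
  exact ⟨g, hg, right_ne_zero_of_mul hρg⟩

theorem isIrrChar_of_mem_Rset [Finite G] (hS : S ∈ Rset N q) (hρ : ρ ∈ S) : IsIrrChar G ρ := by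
  obtain ⟨⟨σ, hσ, rfl⟩, -⟩ := hS
  obtain ⟨χ, rfl⟩ := hρ
  exact hσ.charMul χ

theorem qhatOrbit_mem_Rset (hρ : IsIrrChar G ρ) {g : G} (hg : g ∈ coset N q) (hρg : ρ g ≠ 0) :
    qhatOrbit N ρ ∈ Rset N q :=
  ⟨⟨ρ, hρ, rfl⟩, ρ, mem_qhatOrbit_self N ρ, g, hg, hρg⟩

end DualAction

section CosetInner

variable {N : Subgroup G} [N.Normal] {q : G} {ρ σ : G → ℂ}

theorem mem_coset_conj_iff (hQ : ∀ a b : G ⧸ N, a * b = b * a) {g h : G} :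
    h * g * h⁻¹ ∈ coset N q ↔ g ∈ coset N q := by
  have hgh : ((h * g * h⁻¹ : G) : G ⧸ N) = g := by
    rw [QuotientGroup.mk_mul, QuotientGroup.mk_mul, hQ h, mul_assoc, ← QuotientGroup.mk_mul,
      mul_inv_cancel, QuotientGroup.mk_one, mul_one]
  exact Eq.congr_left hgh

theorem mk_mem_Cset_iff (hQ : ∀ a b : G ⧸ N, a * b = b * a) {g : G} :
    ConjClasses.mk g ∈ Cset N q ↔ g ∈ coset N q := by
  refine ⟨fun h ↦ h ConjClasses.mem_carrier_mk, fun hg k hk ↦ ?_⟩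
  rw [ConjClasses.mem_carrier_iff_mk_eq, ConjClasses.mk_eq_mk_iff_isConj, isConj_iff] at hk
  obtain ⟨c, rfl⟩ := hk
  exact (mem_coset_conj_iff hQ).1 hg

variable [Fintype G]

open Classical in
/-- The Hermitian pairing of functions on `G`, restricted to the coset `qN` and not divided by
`#G`. -/
noncomputable def cosetInner (N : Subgroup G) [N.Normal] (q : G) (φ ψ : G → ℂ) : ℂ :=
  ∑ g with g ∈ coset N q, φ g * conj (ψ g)

theorem cosetInner_smul_left (N : Subgroup G) [N.Normal] (q : G) (a : ℂ) (φ ψ : G → ℂ) :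
    cosetInner N q (a • φ) ψ = a * cosetInner N q φ ψ := by
  simp only [cosetInner, Finset.mul_sum, Pi.smul_apply, smul_eq_mul, mul_assoc]

theorem cosetInner_smul_right (N : Subgroup G) [N.Normal] (q : G) (a : ℂ) (φ ψ : G → ℂ) :
    cosetInner N q φ (a • ψ) = conj a * cosetInner N q φ ψ := by
  simp only [cosetInner, Finset.mul_sum, Pi.smul_apply, smul_eq_mul, map_mul, mul_left_comm]

theorem cosetInner_charMul_right (N : Subgroup G) [N.Normal] (q : G) (χ : (G ⧸ N) →* ℂˣ)
    (φ ψ : G → ℂ) : cosetInner N q φ (charMul N χ ψ) = conj (χ q : ℂ) * cosetInner N q φ ψ := by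
  classical
  rw [← cosetInner_smul_right]
  refine Finset.sum_congr rfl fun g hg ↦ ?_
  rw [charMul_apply_of_mem_coset χ ψ (Finset.mem_filter.1 hg).2, Pi.smul_apply, smul_eq_mul]

theorem sum_mul_conj_eq_cosetInner {φ : G → ℂ} (hφ : φ ∈ cosetClassFun N q) (ψ : G → ℂ) :
    ∑ g, φ g * conj (ψ g) = cosetInner N q φ ψ := by
  classical
  refine (Finset.sum_filter_of_ne fun g _ hg ↦ ?_).symm
  by_contra hgq
  exact hg (by rw [hφ.2 g hgq, zero_mul])

-- Averaging over `Q̂` projects onto the functions supported on `qN`.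
theorem card_mul_cosetInner [Fintype ((G ⧸ N) →* ℂˣ)] (hQ : ∀ a b : G ⧸ N, a * b = b * a)
    (q : G) (φ ψ : G → ℂ) :
    (Fintype.card ((G ⧸ N) →* ℂˣ) : ℂ) * cosetInner N q φ ψ =
      ∑ χ : (G ⧸ N) →* ℂˣ, (χ (q : G ⧸ N)⁻¹ : ℂ) * ∑ g, charMul N χ φ g * conj (ψ g) := by
  classical
  let _ : CommGroup (G ⧸ N) := { (inferInstance : Group (G ⧸ N)) with mul_comm := hQ }
  have hdelta (g : G) : ∑ χ : (G ⧸ N) →* ℂˣ, (χ ((q : G ⧸ N)⁻¹ * g) : ℂ) =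
      if g ∈ coset N q then (Fintype.card ((G ⧸ N) →* ℂˣ) : ℂ) else 0 := by
    rw [sum_monoidHom_units_apply]
    exact if_congr (inv_mul_eq_one.trans eq_comm) rfl rfl
  calc _ = ∑ g : G, (∑ χ : (G ⧸ N) →* ℂˣ, (χ ((q : G ⧸ N)⁻¹ * g) : ℂ)) * (φ g * conj (ψ g)) := by
        simp only [hdelta, cosetInner, Finset.mul_sum, Finset.sum_filter, ite_mul, zero_mul,
          mul_ite, mul_zero]
    _ = ∑ g : G, ∑ χ : (G ⧸ N) →* ℂˣ, (χ (q : G ⧸ N)⁻¹ : ℂ) * (charMul N χ φ g * conj (ψ g)) := by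
        simp only [Finset.sum_mul, map_mul, Units.val_mul, charMul, mul_assoc]
    _ = _ := by rw [Finset.sum_comm]; simp only [Finset.mul_sum]

theorem cosetInner_eq_zero_of_notMem_qhatOrbit (hQ : ∀ a b : G ⧸ N, a * b = b * a)
    (hρ : IsIrrChar G ρ) (hσ : IsIrrChar G σ) (h : σ ∉ qhatOrbit N ρ) :
    cosetInner N q ρ σ = 0 := by
  have := Fintype.ofFinite ((G ⧸ N) →* ℂˣ)
  have hsum := card_mul_cosetInner hQ q ρ σ
  rw [Finset.sum_eq_zero fun χ _ ↦ ?_] at hsum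
  · exact (mul_eq_zero.1 hsum).resolve_left (Nat.cast_ne_zero.2 Fintype.card_ne_zero)
  · rw [(hρ.charMul χ).sum_mul_conj hσ, if_neg fun hχ ↦ h ⟨χ, hχ.symm⟩, mul_zero]

attribute [local instance] qhatMulAction

theorem ncard_qhatOrbit_mul_cosetInner_self (hQ : ∀ a b : G ⧸ N, a * b = b * a)
    (hρ : IsIrrChar G ρ) {g : G} (hg : g ∈ coset N q) (hρg : ρ g ≠ 0) :
    (qhatOrbit N ρ).ncard * cosetInner N q ρ ρ = Fintype.card G := by
  classical
  have := Fintype.ofFinite ((G ⧸ N) →* ℂˣ)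
  let s : ℂ := Nat.card (MulAction.stabilizer ((G ⧸ N) →* ℂˣ) ρ)
  have hs : s ≠ 0 := Nat.cast_ne_zero.2 Nat.card_pos.ne'
  have hterm (χ : (G ⧸ N) →* ℂˣ) :
      (χ (q : G ⧸ N)⁻¹ : ℂ) * ∑ k, charMul N χ ρ k * conj (ρ k) =
        if χ ∈ MulAction.stabilizer ((G ⧸ N) →* ℂˣ) ρ then (Fintype.card G : ℂ) else 0 := by
    rw [(hρ.charMul χ).sum_mul_conj hρ]
    by_cases hχ : charMul N χ ρ = ρ
    · rw [if_pos hχ, if_pos (MulAction.mem_stabilizer_iff.2 hχ), map_inv,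
        apply_eq_one_of_charMul_eq_self hχ hg hρg, inv_one, Units.val_one, one_mul]
    · rw [if_neg hχ, if_neg fun h ↦ hχ (MulAction.mem_stabilizer_iff.1 h), mul_zero]
  refine mul_left_cancel₀ hs ?_
  calc s * ((qhatOrbit N ρ).ncard * cosetInner N q ρ ρ)
      = Fintype.card ((G ⧸ N) →* ℂˣ) * cosetInner N q ρ ρ := by
        rw [← mul_assoc, mul_comm s, ← Nat.card_eq_fintype_card,
          ← ncard_qhatOrbit_mul_card_stabilizer N ρ, Nat.cast_mul]
    _ = s * Fintype.card G := by
        rw [card_mul_cosetInner hQ, Finset.sum_congr rfl fun χ _ ↦ hterm χ, ← Finset.sum_filter,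
          Finset.sum_const, nsmul_eq_mul, ← Fintype.card_subtype, ← Nat.card_eq_fintype_card]

end CosetInner

section Basis

theorem sum_ncard_mul_eq_sum_filter_mk_mem {R : Type*} [NonAssocSemiring R] [Fintype G]
    {s : Set (ConjClasses G)} [Fintype s] [DecidablePred fun g : G ↦ ConjClasses.mk g ∈ s]
    {r : s → G} (hr : ∀ c : s, r c ∈ (c : ConjClasses G).carrier) {F : G → R}
    (hF : ∀ g h, F (h * g * h⁻¹) = F g) :
    ∑ c : s, ((c : ConjClasses G).carrier.ncard : R) * F (r c) =
      ∑ g with ConjClasses.mk g ∈ s, F g := by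
  classical
  have hclass (c : s) : ∀ g ∈ (c : ConjClasses G).carrier, F g = F (r c) := fun g hg ↦ by
    obtain ⟨k, hk⟩ := isConj_iff.1 (ConjClasses.mk_eq_mk_iff_isConj.1
      ((ConjClasses.mem_carrier_iff_mk_eq.1 hg).trans
        (ConjClasses.mem_carrier_iff_mk_eq.1 (hr c)).symm))
    rw [← hk, hF]
  have hfiber (c : s) : {g | ConjClasses.mk g = c} = (c : ConjClasses G).carrier :=
    ConjClasses.carrier_eq_preimage_mk.symm
  calc _ = ∑ c : s, ∑ g with ConjClasses.mk g = (c : ConjClasses G), F g := by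
        refine Finset.sum_congr rfl fun c _ ↦ ?_
        rw [Finset.sum_congr rfl fun g hg ↦ hclass c g
            (ConjClasses.mem_carrier_iff_mk_eq.2 (Finset.mem_filter.1 hg).2),
          Finset.sum_const, nsmul_eq_mul, ← Set.ncard_coe_finset, Finset.coe_filter_univ, hfiber]
    _ = ∑ g with ConjClasses.mk g ∈ s, F g := by
        rw [Finset.sum_set_coe s (f := fun c ↦ ∑ g with ConjClasses.mk g = c, F g),
          ← Finset.sum_fiberwise_of_maps_to (g := ConjClasses.mk) (t := s.toFinset)
            fun g hg ↦ Set.mem_toFinset.2 (Finset.mem_filter.1 hg).2]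
        refine Finset.sum_congr rfl fun c hc ↦ ?_
        rw [Finset.filter_filter]
        exact Finset.sum_congr (Finset.filter_congr fun g _ ↦
          ⟨fun h ↦ ⟨h ▸ Set.mem_toFinset.1 hc, h⟩, And.right⟩) fun _ _ ↦ rfl

variable {N : Subgroup G} [N.Normal] {q : G} {r : Cset N q → G}

/-- The coordinates of a class function at the representatives `r` of the classes in `C_q`, scaled
by `√#[g]` so that the pairing over `qN` becomes the standard one on `ℂ^{C_q}`. -/
noncomputable def classVec (r : Cset N q → G) (f : G → ℂ) : Cset N q → ℂ :=
  fun c ↦ (√((c : ConjClasses G).carrier.ncard : ℝ) : ℂ) * f (r c)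

theorem exists_mem_cosetClassFun_classVec_eq [Finite G] (hQ : ∀ a b : G ⧸ N, a * b = b * a)
    (hr : ∀ c : Cset N q, r c ∈ (c : ConjClasses G).carrier) (v : Cset N q → ℂ) :
    ∃ f ∈ cosetClassFun N q, classVec r f = v := by
  let w : Cset N q → ℂ := fun c ↦ v c / √((c : ConjClasses G).carrier.ncard : ℝ)
  refine ⟨Function.extend Subtype.val w 0 ∘ ConjClasses.mk, ⟨fun g h ↦ ?_, fun g hg ↦ ?_⟩, ?_⟩
  · exact congrArg (Function.extend Subtype.val w 0)
      (ConjClasses.mk_eq_mk_iff_isConj.2 (isConj_iff.2 ⟨h, rfl⟩).symm)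
  · exact Function.extend_apply' _ _ _ fun ⟨c, hc⟩ ↦ hg ((mk_mem_Cset_iff hQ).1 (hc ▸ c.2))
  · ext c
    have hc : (√((c : ConjClasses G).carrier.ncard : ℝ) : ℂ) ≠ 0 := by
      have : (c : ConjClasses G).carrier.ncard ≠ 0 := Set.ncard_ne_zero_of_mem (hr c)
      exact Complex.ofReal_ne_zero.2 (Real.sqrt_ne_zero'.2 (by positivity))
    rw [classVec, Function.comp_apply, ConjClasses.mem_carrier_iff_mk_eq.1 (hr c),
      Subtype.val_injective.extend_apply, mul_div_cancel₀ _ hc]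

variable [Fintype G]

theorem classVec_dotProduct_star_classVec [Fintype (Cset N q)] (hQ : ∀ a b : G ⧸ N, a * b = b * a)
    (hr : ∀ c : Cset N q, r c ∈ (c : ConjClasses G).carrier) {φ ψ : G → ℂ}
    (hφ : φ ∈ classFunSubmodule G) (hψ : ψ ∈ classFunSubmodule G) :
    classVec r φ ⬝ᵥ star (classVec r ψ) = cosetInner N q φ ψ := by
  classical
  have hsqrt (n : ℕ) : (√(n : ℝ) : ℂ) * √(n : ℝ) = n := by
    rw [← Complex.ofReal_mul, Real.mul_self_sqrt n.cast_nonneg, Complex.ofReal_natCast]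
  have hφψ (g h : G) : φ (h * g * h⁻¹) * conj (ψ (h * g * h⁻¹)) = φ g * conj (ψ g) := by
    rw [hφ g h, hψ g h]
  calc _ = ∑ c : Cset N q,
        ((c : ConjClasses G).carrier.ncard : ℂ) * (φ (r c) * conj (ψ (r c))) := by
        refine Finset.sum_congr rfl fun c _ ↦ ?_
        rw [Pi.star_apply, classVec, classVec, ← hsqrt, star_mul', RCLike.star_def,
          Complex.conj_ofReal, mul_mul_mul_comm]
    _ = cosetInner N q φ ψ := by
        refine (sum_ncard_mul_eq_sum_filter_mk_mem hr (F := fun g ↦ φ g * conj (ψ g)) hφψ).trans ?_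
        exact Finset.sum_congr (Finset.filter_congr fun g _ ↦ mk_mem_Cset_iff hQ) fun _ _ ↦ rfl

/-- The character `ρ` scaled by `√(#[ρ] / #G)`, which makes it a unit vector for the pairing over
any coset on which it does not vanish. -/
noncomputable def normalizedChar (N : Subgroup G) [N.Normal] (ρ : G → ℂ) : G → ℂ :=
  (√((qhatOrbit N ρ).ncard / Fintype.card G : ℝ) : ℂ) • ρ

variable {rep : Rset N q → G → ℂ}

theorem cosetInner_normalizedChar (hQ : ∀ a b : G ⧸ N, a * b = b * a)
    [DecidableEq (Rset N q)] (hrep : ∀ S : Rset N q, rep S ∈ (S : Set (G → ℂ))) (S T : Rset N q) :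
    cosetInner N q (normalizedChar N (rep S)) (normalizedChar N (rep T)) =
      if S = T then 1 else 0 := by
  have hS := isIrrChar_of_mem_Rset S.2 (hrep S)
  rw [normalizedChar, normalizedChar, cosetInner_smul_left, cosetInner_smul_right,
    Complex.conj_ofReal]
  split_ifs with h
  · subst h
    obtain ⟨g, hg, hne⟩ := exists_mem_coset_ne_zero_of_mem_Rset S.2 (hrep S)
    have hG : (Fintype.card G : ℂ) ≠ 0 := Nat.cast_ne_zero.2 Fintype.card_ne_zero
    rw [← mul_assoc, ← Complex.ofReal_mul, Real.mul_self_sqrt (by positivity), Complex.ofReal_div,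
      Complex.ofReal_natCast, Complex.ofReal_natCast, div_mul_eq_mul_div,
      ncard_qhatOrbit_mul_cosetInner_self hQ hS hg hne, div_self hG]
  · have hmem : rep T ∉ qhatOrbit N (rep S) := fun hT ↦ h <| Subtype.ext <| by
      rw [eq_qhatOrbit_of_mem_Rset S.2 (hrep S), eq_qhatOrbit_of_mem_Rset T.2 (hrep T),
        qhatOrbit_eq_of_mem hT]
    rw [cosetInner_eq_zero_of_notMem_qhatOrbit hQ hS (isIrrChar_of_mem_Rset T.2 (hrep T)) hmem,
      mul_zero, mul_zero]

theorem eq_zero_of_forall_cosetInner_normalizedChar_eq_zero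
    (hrep : ∀ S : Rset N q, rep S ∈ (S : Set (G → ℂ))) {f : G → ℂ} (hf : f ∈ cosetClassFun N q)
    (h : ∀ S, cosetInner N q f (normalizedChar N (rep S)) = 0) : f = 0 := by
  classical
  have hinner (S : Rset N q) : cosetInner N q f (rep S) = 0 := by
    have hS := h S
    rw [normalizedChar, cosetInner_smul_right, Complex.conj_ofReal] at hS
    refine (mul_eq_zero.1 hS).resolve_left (Complex.ofReal_ne_zero.2 (Real.sqrt_ne_zero'.2 ?_))
    have := ncard_qhatOrbit_ne_zero N (rep S)
    positivity
  refine eq_zero_of_forall_isIrrChar_sum_mul_conj_eq_zero hf.1 fun ρ hρ ↦ ?_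
  by_cases hvanish : ∃ g ∈ coset N q, ρ g ≠ 0
  · obtain ⟨g, hg, hρg⟩ := hvanish
    let S : Rset N q := ⟨qhatOrbit N ρ, qhatOrbit_mem_Rset hρ hg hρg⟩
    obtain ⟨χ, hχ⟩ : ρ ∈ qhatOrbit N (rep S) :=
      eq_qhatOrbit_of_mem_Rset S.2 (hrep S) ▸ mem_qhatOrbit_self N ρ
    rw [sum_mul_conj_eq_cosetInner hf, hχ, cosetInner_charMul_right, hinner, mul_zero]
  · push Not at hvanish
    rw [sum_mul_conj_eq_cosetInner hf]
    refine Finset.sum_eq_zero fun g hg ↦ ?_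
    rw [hvanish g (Finset.mem_filter.1 hg).2, map_zero, mul_zero]

end Basis

/-- The matrix `M_q` with entries `√(#[g]·#[ρ]/#G)·ρ(g)`, rows indexed by
`R_q` (via chosen representatives `rep`) and columns by `C_q` (via chosen representatives
`gRep`), is unitary. -/
theorem matrix_Mq_unitary
    (G : Type) [Group G] [Fintype G] (N : Subgroup G) [N.Normal]
    (hQ : ∀ a b : G ⧸ N, a * b = b * a) (q : G)
    [Fintype ↥(Rset N q)] [Fintype ↥(Cset N q)]
    [DecidableEq ↥(Rset N q)] [DecidableEq ↥(Cset N q)]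
    (rep : ↥(Rset N q) → (G → ℂ))
    (hrep : ∀ S : ↥(Rset N q), rep S ∈ (S : Set (G → ℂ)))
    (gRep : ↥(Cset N q) → G)
    (hgRep : ∀ c : ↥(Cset N q), gRep c ∈ (c : ConjClasses G).carrier)
    (M : Matrix ↥(Rset N q) ↥(Cset N q) ℂ)
    (hM : ∀ S c, M S c =
      (Real.sqrt ((((c : ConjClasses G).carrier.ncard * (qhatOrbit N (rep S)).ncard : ℕ) : ℝ)
          / (Fintype.card G : ℝ)) : ℂ) * rep S (gRep c)) :
    M * M.conjTranspose = 1 ∧ M.conjTranspose * M = 1 := by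
  have hrow (S : Rset N q) : M S = classVec gRep (normalizedChar N (rep S)) := by
    ext c
    rw [hM, classVec, normalizedChar, Pi.smul_apply, smul_eq_mul, Nat.cast_mul, mul_div_assoc,
      Real.sqrt_mul (Nat.cast_nonneg _), Complex.ofReal_mul, mul_assoc]
  have hclass (S : Rset N q) : normalizedChar N (rep S) ∈ classFunSubmodule G :=
    (classFunSubmodule G).smul_mem _ (isIrrChar_of_mem_Rset S.2 (hrep S)).mem_classFunSubmodule
  have hM_mul : M * M.conjTranspose = 1 := by
    ext S T
    calc (M * M.conjTranspose) S T = M S ⬝ᵥ star (M T) := rfl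
      _ = (1 : Matrix (Rset N q) (Rset N q) ℂ) S T := by
        rw [hrow, hrow, classVec_dotProduct_star_classVec hQ hgRep (hclass S) (hclass T),
          cosetInner_normalizedChar hQ hrep, Matrix.one_apply]
  refine ⟨hM_mul, matrix_mul_eq_one_of_forall_vecMul_eq_zero hM_mul fun v hv ↦ ?_⟩
  obtain ⟨f, hf, rfl⟩ := exists_mem_cosetClassFun_classVec_eq hQ hgRep v
  have hf₀ : f = 0 := eq_zero_of_forall_cosetInner_normalizedChar_eq_zero hrep hf fun S ↦ by
    rw [← classVec_dotProduct_star_classVec hQ hgRep hf.1 (hclass S), ← hrow]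
    exact congrFun hv S
  ext c
  rw [hf₀, classVec, Pi.zero_apply, mul_zero, Pi.zero_apply]
end

section
/- Let G be a finite group, N a normal subgroup with Q = G/N abelian, q ∈ G, and ρ an irreducible complex character of G. Then ρ is not identically zero on the coset qN if and only if qN lies in the kernel of every character χ ∈ Q̂ that stabilizes ρ (i.e. every χ with χ̃ ⊗ ρ = ρ satisfies χ(qN) = 1). -/
open scoped BigOperators

variable {G : Type} [Group G]

/-!
Each twist `χ · ρ` is again irreducible, so by orthonormality `∑ g, χ(g) ρ(g) ρ(g⁻¹)` is `|G|` if
`χ` stabilizes `ρ` and `0` otherwise. Summing these identities against `χ(q)⁻¹` over the dual of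
`Q` isolates the coset `qN`:
`|Q| ∑_{g ∈ qN} ρ(g) ρ(g⁻¹) = |G| ∑_{χ ∈ Stab ρ} χ(q)⁻¹`.
If every `χ` in the stabilizer is trivial on `qN`, the right side is `|G| |Stab ρ| ≠ 0`, so `ρ`
does not vanish on `qN`. Conversely, `χ(g) ρ(g) = ρ(g) ≠ 0` forces `χ(g) = 1`.
-/

open CategoryTheory

universe u v

section Twist

variable {k : Type u} [Field k] {G : Type v} [Monoid G]

/-- Tensoring finite-dimensional representations with a linear character `χ`. The underlying
space of `V ⊗ χ` is that of `V`, with `g` acting as `χ g • V.ρ g`. -/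
noncomputable def twist (χ : G →* kˣ) : FDRep k G ⥤ FDRep k G where
  obj V :=
    { V := V.V
      ρ :=
        { toFun g := (χ g : k) • (Action.ρ V g : V.V ⟶ V.V)
          map_one' := by simp
          map_mul' g h := by simp [End.mul_def, smul_smul, mul_comm] } }
  map {V W} f :=
    { hom := f.hom
      comm g := by
        change ((χ g : k) • (Action.ρ V g : V.V ⟶ V.V)) ≫ f.hom =
          f.hom ≫ ((χ g : k) • (Action.ρ W g : W.V ⟶ W.V))
        rw [Linear.smul_comp, Linear.comp_smul, f.comm] }

theorem twist_obj_character (χ : G →* kˣ) (V : FDRep k G) (g : G) :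
    ((twist χ).obj V).character g = χ g * V.character g :=
  map_smul (LinearMap.trace k V) (χ g : k) (V.ρ g)

/-- `twist χ` as an auto-equivalence, with inverse `twist χ⁻¹`; it is what shows that twisting
preserves irreducibility. -/
noncomputable def twistEquivalence (χ : G →* kˣ) : FDRep k G ≌ FDRep k G where
  functor := twist χ
  inverse := twist χ⁻¹
  unitIso := NatIso.ofComponents fun V ↦ Action.mkIso (Iso.refl V.V) fun g ↦ by
    ext v
    exact (inv_smul_smul (χ g) (V.ρ g v)).symm
  counitIso := NatIso.ofComponents fun V ↦ Action.mkIso (Iso.refl V.V) fun g ↦ by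
    ext v
    exact smul_inv_smul (χ g) (V.ρ g v)

instance simple_twist_obj (χ : G →* kˣ) (V : FDRep k G) [Simple V] : Simple ((twist χ).obj V) :=
  have : (twist χ).IsEquivalence := (twistEquivalence χ).isEquivalence_functor
  simple_obj (twist χ) V

end Twist

section Stabilizer

variable {k G A : Type*} [Field k] [Group A]

/-- The stabilizer of `φ : G → k` under the linear characters of `A`, acting on functions on `G`
through `f : G → A` by `(χ · φ) g = χ (f g) * φ g`. -/
def charStabilizer (f : G → A) (φ : G → k) : Subgroup (A →* kˣ) where
  carrier := {χ | ∀ g, χ (f g) * φ g = φ g}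
  one_mem' g := by simp
  mul_mem' {χ ψ} hχ hψ g := by
    rw [MonoidHom.mul_apply, Units.val_mul, mul_assoc, hψ g, hχ g]
  inv_mem' {χ} hχ g := by
    rw [MonoidHom.inv_apply, Units.inv_mul_eq_iff_eq_mul, hχ g]

theorem mem_charStabilizer {f : G → A} {φ : G → k} {χ : A →* kˣ} :
    χ ∈ charStabilizer f φ ↔ ∀ g, χ (f g) * φ g = φ g :=
  Iff.rfl

theorem apply_eq_one_of_mem_charStabilizer {f : G → A} {φ : G → k} {χ : A →* kˣ}
    (hχ : χ ∈ charStabilizer f φ) {g : G} (hg : φ g ≠ 0) : χ (f g) = 1 :=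
  Units.ext (mul_eq_right₀ hg |>.mp (hχ g))

end Stabilizer

section Dual

theorem hasEnoughRootsOfUnity_exponent (k A : Type*) [Field k] [IsAlgClosed k] [Group A]
    [NeZero (Nat.card A : k)] : HasEnoughRootsOfUnity k (Monoid.exponent A) := by
  obtain ⟨m, hm⟩ := Group.exponent_dvd_nat_card (G := A)
  have : NeZero (Monoid.exponent A : k) :=
    ⟨left_ne_zero_of_mul (b := (m : k)) (by rw [← Nat.cast_mul, ← hm]; exact NeZero.ne _)⟩
  infer_instance

variable {k A : Type*} [Field k] [IsAlgClosed k] [CommGroup A] [Finite A]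
  [NeZero (Nat.card A : k)]

theorem sum_dual_apply_inv_mul_apply [DecidableEq A] [Fintype (A →* kˣ)] (a b : A) :
    ∑ χ : A →* kˣ, (χ a⁻¹ : k) * χ b = if b = a then (Nat.card A : k) else 0 := by
  classical
  have := hasEnoughRootsOfUnity_exponent k A
  let ev (c : A) : (A →* kˣ) →* k := (Units.coeHom k).comp (MonoidHom.eval c)
  have ev_eq_one_iff (c : A) : ev c = 1 ↔ c = 1 := by
    simp [ev, MonoidHom.ext_iff, ← CommGroup.forall_apply_eq_apply_iff A (M := k) (g := c)]
  calc ∑ χ : A →* kˣ, (χ a⁻¹ : k) * χ b = ∑ χ, ev (a⁻¹ * b) χ := by simp [ev]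
    _ = if b = a then (Nat.card A : k) else 0 := by
      simp [sum_hom_units, ev_eq_one_iff, inv_mul_eq_one, eq_comm (a := a),
        ← CommGroup.card_monoidHom_of_hasEnoughRootsOfUnity A k]

theorem natCast_card_subgroup_dual_ne_zero (S : Subgroup (A →* kˣ)) : (Nat.card S : k) ≠ 0 := by
  have := hasEnoughRootsOfUnity_exponent k A
  obtain ⟨m, hm⟩ := S.card_subgroup_dvd_card
  rw [CommGroup.card_monoidHom_of_hasEnoughRootsOfUnity] at hm
  exact left_ne_zero_of_mul (b := (m : k)) (by rw [← Nat.cast_mul, ← hm]; exact NeZero.ne _)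

end Dual

section Character

variable {k : Type u} [Field k] [IsAlgClosed k] {G : Type v} [Group G] [Fintype G]
  [NeZero (Nat.card G : k)]

open scoped Classical in
theorem sum_mul_character_mul_character_inv (χ : G →* kˣ) (V : FDRep k G) [Simple V] :
    ∑ g, (χ g : k) * (V.character g * V.character g⁻¹) =
      if ∀ g, χ g * V.character g = V.character g then (Nat.card G : k) else 0 := by
  have := invertibleOfNonzero (NeZero.ne (Nat.card G : k))
  have inner_product (W : FDRep k G) [Simple W] :
      ∑ g, W.character g * V.character g⁻¹ =
        if Nonempty (W ≅ V) then (Nat.card G : k) else 0 := by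
    rw [(inv_mul_eq_iff_eq_mul₀ (NeZero.ne (Nat.card G : k))).mp (FDRep.char_orthonormal W V),
      mul_ite, mul_one, mul_zero]
  split_ifs with hχ
  · simpa [← mul_assoc, hχ, Nonempty.intro (Iso.refl V)] using inner_product V
  · have not_iso : ¬ Nonempty ((twist χ).obj V ≅ V) := fun ⟨e⟩ ↦
      hχ fun g ↦ by rw [← twist_obj_character, FDRep.char_iso e]
    simpa [twist_obj_character, mul_assoc, not_iso] using inner_product ((twist χ).obj V)

variable {A : Type*} [CommGroup A] [Finite A] [NeZero (Nat.card A : k)]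

theorem card_mul_sum_fiber_character_mul_character_inv [DecidableEq A] (f : G →* A)
    (V : FDRep k G) [Simple V] [Fintype (charStabilizer f V.character)] (a : A) :
    Nat.card A * ∑ g with f g = a, V.character g * V.character g⁻¹ =
      Nat.card G * ∑ χ : charStabilizer f V.character, ((χ : A →* kˣ) a⁻¹ : k) := by
  classical
  have := hasEnoughRootsOfUnity_exponent k A
  have := Fintype.ofFinite (A →* kˣ)
  let c (g : G) : k := V.character g * V.character g⁻¹
  calc Nat.card A * ∑ g with f g = a, c g
      = ∑ g, (∑ χ : A →* kˣ, (χ a⁻¹ : k) * χ (f g)) * c g := by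
        simp_rw [sum_dual_apply_inv_mul_apply, ite_mul, zero_mul, Finset.mul_sum, Finset.sum_filter]
    _ = ∑ χ : A →* kˣ, (χ a⁻¹ : k) * ∑ g, (χ.comp f g : k) * c g := by
        simp_rw [Finset.sum_mul, Finset.mul_sum, ← mul_assoc]
        exact Finset.sum_comm
    _ = ∑ χ : A →* kˣ with χ ∈ charStabilizer f V.character, (χ a⁻¹ : k) * Nat.card G := by
        simp_rw [c, sum_mul_character_mul_character_inv, mul_ite, mul_zero, Finset.sum_filter,
          mem_charStabilizer, MonoidHom.comp_apply]
    _ = Nat.card G * ∑ χ : charStabilizer f V.character, ((χ : A →* kˣ) a⁻¹ : k) := by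
        rw [← Finset.sum_mul, mul_comm,
          Finset.sum_subtype (p := (· ∈ charStabilizer f V.character)) _ (by simp)]

end Character

theorem not_zero_on_coset_iff_mem_kernels_general {k : Type u} [Field k] [IsAlgClosed k]
    {G : Type v} [Group G] [Finite G] [NeZero (Nat.card G : k)]
    {A : Type*} [CommGroup A] [Finite A] [NeZero (Nat.card A : k)]
    (f : G →* A) (V : FDRep k G) [Simple V] (a : A) :
    (∃ g, f g = a ∧ V.character g ≠ 0) ↔ ∀ χ ∈ charStabilizer f V.character, χ a = 1 := by
  classical
  refine ⟨?_, fun hker ↦ ?_⟩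
  · rintro ⟨g, rfl, hg⟩ χ hχ
    exact apply_eq_one_of_mem_charStabilizer hχ hg
  · have := Fintype.ofFinite G
    have := hasEnoughRootsOfUnity_exponent k A
    have := Fintype.ofFinite (charStabilizer f V.character)
    by_contra! vanish
    have fiber_sum : ∑ g with f g = a, V.character g * V.character g⁻¹ = 0 :=
      Finset.sum_eq_zero fun g hg ↦ by simp [vanish g (Finset.mem_filter.mp hg).2]
    have stabilizer_sum : ∑ χ : charStabilizer f V.character, ((χ : A →* kˣ) a⁻¹ : k) =
        Nat.card (charStabilizer f V.character) := by
      simp [hker _ (Subtype.prop _)]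
    have h := card_mul_sum_fiber_character_mul_character_inv f V a
    rw [fiber_sum, stabilizer_sum, mul_zero] at h
    exact mul_ne_zero (NeZero.ne _) (natCast_card_subgroup_dual_ne_zero _) h.symm

/-- `ρ` is not identically zero on `qN` iff `qN` lies in the kernel of
every `χ ∈ Q̂` stabilizing `ρ`. -/
theorem not_zero_on_coset_iff_mem_kernels
    (G : Type) [Group G] [Fintype G] (N : Subgroup G) [N.Normal]
    (hQ : ∀ a b : G ⧸ N, a * b = b * a) (q : G)
    (ρ : G → ℂ) (hρ : IsIrrChar G ρ) :
    (∃ g ∈ coset N q, ρ g ≠ 0) ↔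
      (∀ χ : (G ⧸ N) →* ℂˣ, charMul N χ ρ = ρ → χ (q : G ⧸ N) = 1) := by
  obtain ⟨V, _, rfl⟩ := hρ
  let _ : CommGroup (G ⧸ N) := { mul_comm := hQ }
  simpa [coset, charMul, funext_iff, mem_charStabilizer] using
    not_zero_on_coset_iff_mem_kernels_general (QuotientGroup.mk' N) V (q : G ⧸ N)
end
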